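/- arXiv:2206.07335 — 14 statements merged into one kernel-verified Lean document; each statement's English description precedes it below -/
import Mathlib

section
/- Let E = ℝ^D, let f, δ : E → E, and let φ : ℝ → E → E satisfy φ(0, x) = x and (d/dt)φ(t, x) = f(φ(t, x)) for all t ∈ ℝ and x ∈ E. Let Φ : ℝ → (E → E) → (E → E) be a one-step method (for step size h and vector field g it produces the map Φ_h(g) : E → E), let p ≥ 1 be an integer, and let (f_k)_{k≥0} be a sequence of maps E → E with f_0 = f. Assume: (order-p condition) for every x ∈ E, Φ_h(f)(x) − φ(h, x) − h^{p+1}·δ(x) = o(h^{p+1}) as h → 0; and (inverse modified equation recursion) for every integer k ≥ 1 and every x ∈ E, φ(h, x) − Φ_h(y ↦ Σ_{j=0}^{k−1} h^j f_j(y))(x) − h^{k+1}·f_k(x) = o(h^{k+1}) as h → 0. Then f_k(x) = 0 for every x ∈ E and every k with 1 ≤ k ≤ p−1, and f_p(x) = −δ(x) for every x ∈ E. -/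
open Filter Topology Asymptotics

theorem aux_zero {D : ℕ} (n : ℕ) (v : Fin D → ℝ)
    (h : (fun t : ℝ => t ^ n • v) =o[𝓝 0] fun t : ℝ => t ^ n) : v = 0 := by
  by_contra hv
  have hv' : 0 < ‖v‖ := norm_pos_iff.mpr hv
  have h1 := (h.def (half_pos hv')).filter_mono (nhdsWithin_le_nhds (s := {0}ᶜ))
  obtain ⟨t, ht, ht0⟩ := (h1.and self_mem_nhdsWithin).exists
  have ht0' : t ≠ 0 := ht0
  have hpos : 0 < ‖t ^ n‖ := norm_pos_iff.mpr (pow_ne_zero n ht0')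
  rw [norm_smul] at ht
  nlinarith [mul_pos hpos hv']

theorem stmt0 {D : ℕ} (f δ : (Fin D → ℝ) → (Fin D → ℝ))
    (φ : ℝ → (Fin D → ℝ) → (Fin D → ℝ))
    (Φ : ℝ → ((Fin D → ℝ) → (Fin D → ℝ)) → ((Fin D → ℝ) → (Fin D → ℝ)))
    (p : ℕ) (hp : 1 ≤ p)
    (fs : ℕ → (Fin D → ℝ) → (Fin D → ℝ))
    (hφ0 : ∀ x, φ 0 x = x)
    (hφ : ∀ t x, HasDerivAt (fun s => φ s x) (f (φ t x)) t)
    (hfs0 : fs 0 = f)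
    (horder : ∀ x, (fun h : ℝ => Φ h f x - φ h x - h ^ (p + 1) • δ x)
      =o[𝓝 0] fun h : ℝ => h ^ (p + 1))
    (hrec : ∀ k : ℕ, 1 ≤ k → ∀ x,
      (fun h : ℝ => φ h x - Φ h (fun y => ∑ j ∈ Finset.range k, h ^ j • fs j y) x
          - h ^ (k + 1) • fs k x) =o[𝓝 0] fun h : ℝ => h ^ (k + 1)) :
    (∀ k, 1 ≤ k → k ≤ p - 1 → ∀ x, fs k x = 0) ∧ (∀ x, fs p x = - δ x) := by
  have hsum : ∀ k, 1 ≤ k → (∀ j, 1 ≤ j → j < k → ∀ x, fs j x = 0) → ∀ h : ℝ,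
      (fun y => ∑ j ∈ Finset.range k, h ^ j • fs j y) = f := by
    intro k hk hz h
    funext y
    rw [Finset.sum_eq_single_of_mem 0 (Finset.mem_range.mpr hk)]
    · simp [hfs0]
    · intro j hj hj0
      rw [hz j (Nat.one_le_iff_ne_zero.mpr hj0) (Finset.mem_range.mp hj) y, smul_zero]
  have hmain : ∀ k, 1 ≤ k → k ≤ p - 1 → ∀ x, fs k x = 0 := by
    intro k
    induction k using Nat.strong_induction_on with
    | _ k ih =>
      intro hk hkp x
      have hs := hsum k hk (fun j hj hjk => ih j hjk hj (by omega))
      have h1 := hrec k hk x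
      simp only [hs] at h1
      have hpk : (fun h : ℝ => h ^ (p + 1)) =o[𝓝 0] fun h : ℝ => h ^ (k + 1) :=
        isLittleO_pow_pow (by omega)
      have h2 := (horder x).trans hpk
      have h3 : (fun h : ℝ => h ^ (p + 1) • δ x) =o[𝓝 0] fun h : ℝ => h ^ (k + 1) := by
        have := hpk.smul_isBigO (isBigO_refl (fun _ : ℝ => δ x) (𝓝 0))
        refine this.trans_isBigO ?_
        refine IsBigO.of_bound ‖δ x‖ (Eventually.of_forall fun h => ?_)
        rw [norm_smul, mul_comm]
      apply aux_zero (k + 1)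
      refine ((h1.add h2).add h3).neg_left.congr_left fun h => ?_
      abel
  refine ⟨hmain, fun x => ?_⟩
  have hs := hsum p hp (fun j hj hjk => hmain j hj (by omega))
  have h1 := hrec p hp x
  simp only [hs] at h1
  rw [← add_eq_zero_iff_eq_neg]
  apply aux_zero (p + 1)
  refine (h1.add (horder x)).neg_left.congr_left fun h => ?_
  rw [smul_add]
  abel
end

section
/- Let D ≥ 1, let ℂ^D carry the supremum (ℓ∞) norm, let x ∈ ℂ^D, let r, m > 0, and let f : ℂ^D → ℂ^D be holomorphic on the open ball B(x, r) with ‖f(z)‖ ≤ m for all z ∈ B(x, r). Let φ : ℂ → ℂ^D satisfy φ(0) = x and, for all complex t with |t| < r/(2m), φ(t) ∈ B(x, r) and φ′(t) = f(φ(t)). Define the inverse-modified-equation coefficients of the explicit Euler method at x by f_k := φ^{(k+1)}(0)/(k+1)! for k ≥ 0 (where φ^{(j)} denotes the j-th complex derivative of φ at 0). Let f_θ : ℂ^D → ℂ^D be any map, and for real h with 0 < h ≤ r/(8m) set the pointwise learning loss L := ‖(x + h·f_θ(x)) − φ(h)‖ / h and K := ⌊r/(4·e·m·h)⌋. Then ‖f_θ(x)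 − Σ_{k=0}^{K} h^k f_k‖ ≤ (4/3)·m·e^{−r/(4·e·m·h)} + L. -/
open Filter Topology Metric

theorem stmt1 {D : ℕ} (hD : 1 ≤ D) (x : Fin D → ℂ) (r m : ℝ) (hr : 0 < r) (hm : 0 < m)
    (f : (Fin D → ℂ) → (Fin D → ℂ))
    (hf : DifferentiableOn ℂ f (ball x r))
    (hfb : ∀ z ∈ ball x r, ‖f z‖ ≤ m)
    (φ : ℂ → Fin D → ℂ) (hφ0 : φ 0 = x)
    (hφ : ∀ t : ℂ, ‖t‖ < r / (2 * m) → φ t ∈ ball x r ∧ HasDerivAt φ (f (φ t)) t)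
    (fθ : (Fin D → ℂ) → (Fin D → ℂ))
    (h : ℝ) (hh : 0 < h) (hh' : h ≤ r / (8 * m)) :
    ‖fθ x - ∑ k ∈ Finset.range (⌊r / (4 * Real.exp 1 * m * h)⌋₊ + 1),
        (h : ℝ) ^ k • (((Nat.factorial (k + 1) : ℂ))⁻¹ • iteratedDeriv (k + 1) φ 0)‖
      ≤ (4 / 3) * m * Real.exp (-r / (4 * Real.exp 1 * m * h))
        + ‖(x + h • fθ x) - φ (h : ℂ)‖ / h := by
  clear hD hf
  have he : 0 < Real.exp 1 := Real.exp_pos 1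
  have he1 : Real.exp 1 < 2.7182818286 := Real.exp_one_lt_d9
  obtain ⟨S, hSdef⟩ : ∃ S : ℝ, S = 5 / 6 * (r / (2 * m)) := ⟨_, rfl⟩
  have hRpos : 0 < r / (2 * m) := by positivity
  have hS : 0 < S := by rw [hSdef]; positivity
  have hSR : S < r / (2 * m) := by rw [hSdef]; linarith
  have hhS : h ≤ 3 / 10 * S := by
    rw [hSdef]
    calc h ≤ r / (8 * m) := hh'
      _ = 3 / 10 * (5 / 6 * (r / (2 * m))) := by field_simp; norm_num
  obtain ⟨q, hq⟩ : ∃ q : ℝ, q = h / S := ⟨_, rfl⟩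
  have hq0 : 0 < q := by rw [hq]; positivity
  have hq1 : q ≤ 3 / 10 := by rw [hq, div_le_iff₀ hS]; exact hhS
  obtain ⟨K, hK⟩ : ∃ K : ℕ, K = ⌊r / (4 * Real.exp 1 * m * h)⌋₊ := ⟨_, rfl⟩
  have hKlt : r / (4 * Real.exp 1 * m * h) < K + 1 := by rw [hK]; exact Nat.lt_floor_add_one _
  rw [← hK]
  let g : ℂ → Fin D → ℂ := fun t => φ t - x
  have hg : ∀ t : ℂ, ‖t‖ < r / (2 * m) → HasDerivAt g (f (φ t)) t :=
    fun t ht => (hφ t ht).2.sub_const x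
  have hgd : ∀ n, iteratedDeriv (n + 1) g 0 = iteratedDeriv (n + 1) φ 0 := by
    intro n
    have : deriv g = deriv φ := by
      funext t; exact deriv_sub_const (f := φ) x
    rw [iteratedDeriv_succ', iteratedDeriv_succ', this]
  have hdiff : DifferentiableOn ℂ g (ball 0 (r / (2 * m))) := by
    intro t ht
    exact (hg t (by simpa using ht)).differentiableAt.differentiableWithinAt
  have hgb : ∀ t ∈ sphere (0 : ℂ) S, ‖g t‖ ≤ m * S := by
    intro t ht
    have ht' : ‖t‖ = S := by simpa using ht
    have := (convex_ball (0 : ℂ) (r / (2 * m))).norm_image_sub_le_of_norm_hasDerivWithin_le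
      (f := g) (f' := fun t => f (φ t)) (C := m) (x := 0) (y := t)
      (fun z hz => (hg z (by simpa using hz)).hasDerivWithinAt)
      (fun z hz => hfb _ (hφ z (by simpa using hz)).1)
      (by simpa using hRpos) (by simp [ht', hSR])
    simpa [g, hφ0, ht'] using this
  have hC : ∀ n, ‖iteratedDeriv n g 0‖ ≤ n.factorial * (m * S) / S ^ n := by
    intro n
    refine Complex.norm_iteratedDeriv_le_of_forall_mem_sphere_norm_le n hS ?_ hgb
    refine DifferentiableOn.diffContOnCl (hdiff.mono ?_)
    rw [closure_ball _ hS.ne']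
    exact closedBall_subset_ball hSR
  have hmem : (h : ℂ) ∈ ball (0 : ℂ) (r / (2 * m)) := by
    simp only [mem_ball, dist_zero_right, Complex.norm_real, Real.norm_eq_abs, abs_of_pos hh]
    linarith
  have hsum := Complex.hasSum_taylorSeries_on_ball hdiff hmem
  have htail := (hasSum_nat_add_iff' (K + 2)).mpr hsum
  have hgeo : HasSum (fun n : ℕ => h * m * q ^ (K + 1) * q ^ n) (h * m * q ^ (K + 1) * (1 - q)⁻¹) :=
    (hasSum_geometric_of_lt_one hq0.le (by linarith)).mul_left _
  have hbd := htail.norm_le_of_bounded hgeo (by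
    intro n
    have hc := hC (n + (K + 2))
    have hfac : (0 : ℝ) < (n + (K + 2)).factorial := by positivity
    rw [norm_smul, norm_smul, norm_inv, Complex.norm_natCast, sub_zero, norm_pow, Complex.norm_real,
      Real.norm_eq_abs, abs_of_pos hh]
    calc _ ≤ ((n + (K + 2)).factorial : ℝ)⁻¹ * (h ^ (n + (K + 2)) *
          ((n + (K + 2)).factorial * (m * S) / S ^ (n + (K + 2)))) := by gcongr
      _ = h * m * q ^ (K + 1) * q ^ n := by
        rw [hq, div_pow, div_pow]
        field_simp
        ring)
  rw [Finset.sum_range_succ'] at hbd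
  have hP : ∀ P : Fin D → ℂ, P = ∑ k ∈ Finset.range (K + 1),
        (h : ℝ) ^ k • (((Nat.factorial (k + 1) : ℂ))⁻¹ • iteratedDeriv (k + 1) φ 0) →
      ∑ k ∈ Finset.range (K + 1), ((Nat.factorial (k + 1) : ℂ))⁻¹ •
        ((h : ℂ) - 0) ^ (k + 1) • iteratedDeriv (k + 1) g 0 = h • P := by
    rintro P rfl
    rw [Finset.smul_sum]
    refine Finset.sum_congr rfl fun k _ => ?_
    rw [hgd]
    ext i
    simp only [Pi.smul_apply, smul_eq_mul, Complex.real_smul, sub_zero]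
    push_cast
    ring
  generalize hPd : ∑ k ∈ Finset.range (K + 1),
        (h : ℝ) ^ k • (((Nat.factorial (k + 1) : ℂ))⁻¹ • iteratedDeriv (k + 1) φ 0) = P
  rw [hP P hPd.symm] at hbd
  have h0 : g 0 = 0 := by simp [g, hφ0]
  simp only [iteratedDeriv_zero, h0, smul_zero, add_zero] at hbd
  -- exponential estimate
  have hexp : q ^ (K + 1) * (1 - q)⁻¹ ≤ 4 / 3 * Real.exp (-r / (4 * Real.exp 1 * m * h)) := by
    have hei : (0.36 : ℝ) ≤ Real.exp (-1) := by
      rw [Real.exp_neg, le_inv_comm₀ (by norm_num) he]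
      norm_num; linarith
    have h1 : q ^ K ≤ Real.exp (-1) ^ K := by gcongr; linarith
    have h2 : q * (1 - q)⁻¹ ≤ 4 / 3 * Real.exp (-1) := by
      rw [← div_eq_mul_inv, div_le_iff₀ (by linarith)]
      nlinarith
    have h3 : Real.exp (-1) ^ (K + 1) ≤ Real.exp (-r / (4 * Real.exp 1 * m * h)) := by
      rw [← Real.exp_nat_mul]
      apply Real.exp_le_exp.mpr
      rw [neg_div]; push_cast; linarith
    have h4 : 0 ≤ q * (1 - q)⁻¹ := mul_nonneg hq0.le (inv_nonneg.mpr (by linarith))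
    calc q ^ (K + 1) * (1 - q)⁻¹ = q ^ K * (q * (1 - q)⁻¹) := by ring
      _ ≤ Real.exp (-1) ^ K * (4 / 3 * Real.exp (-1)) := by gcongr
      _ = 4 / 3 * Real.exp (-1) ^ (K + 1) := by ring
      _ ≤ _ := by gcongr
  have hkey : h * ‖fθ x - P‖ ≤ ‖(x + h • fθ x) - φ (h : ℂ)‖ + ‖g h - h • P‖ := by
    rw [← abs_of_pos hh, ← Real.norm_eq_abs, ← norm_smul, Real.norm_eq_abs, abs_of_pos hh]
    refine le_trans (le_of_eq ?_) (norm_add_le _ _)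
    congr 1
    simp only [g, smul_sub]
    abel
  rw [← sub_le_iff_le_add, ← mul_le_mul_iff_right₀ hh, mul_sub, mul_div_cancel₀ _ hh.ne']
  have : h * m * q ^ (K + 1) * (1 - q)⁻¹ ≤
      h * (4 / 3 * m * Real.exp (-r / (4 * Real.exp 1 * m * h))) := by
    calc _ = h * m * (q ^ (K + 1) * (1 - q)⁻¹) := by ring
      _ ≤ h * m * (4 / 3 * Real.exp (-r / (4 * Real.exp 1 * m * h))) := by gcongr
      _ = _ := by ring
  linarith
end

section
/- Let D ≥ 1, let ℂ^D carry the supremum (ℓ∞) norm, let x ∈ ℂ^D, let r, m > 0, and let f : ℂ^D → ℂ^D be holomorphic on the open ball B(x, r) with ‖f(z)‖ ≤ m for all z ∈ B(x, r). Let φ : ℂ → ℂ^D satisfy φ(0) = x and, for all complex t with |t| < r/(2m), φ(t) ∈ B(x, r) and φ′(t) = f(φ(t)). Let f_θ : ℂ^D → ℂ^D be any map, and for real h with 0 < h ≤ r/(4m) set L := ‖(x + h·f_θ(x)) − φ(h)‖ / h. Then ‖f_θ(x) − f(x)‖ ≤ (m²/r)·h + L. -/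
open Filter Topology Metric

theorem stmt2 {D : ℕ} (hD : 1 ≤ D) (x : Fin D → ℂ) (r m : ℝ) (hr : 0 < r) (hm : 0 < m)
    (f : (Fin D → ℂ) → (Fin D → ℂ))
    (hf : DifferentiableOn ℂ f (ball x r))
    (hfb : ∀ z ∈ ball x r, ‖f z‖ ≤ m)
    (φ : ℂ → Fin D → ℂ) (hφ0 : φ 0 = x)
    (hφ : ∀ t : ℂ, ‖t‖ < r / (2 * m) → φ t ∈ ball x r ∧ HasDerivAt φ (f (φ t)) t)
    (fθ : (Fin D → ℂ) → (Fin D → ℂ))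
    (h : ℝ) (hh : 0 < h) (hh' : h ≤ r / (4 * m)) :
    ‖fθ x - f x‖ ≤ (m ^ 2 / r) * h + ‖(x + h • fθ x) - φ (h : ℂ)‖ / h := by
  have hlt : r / (4 * m) < r / (2 * m) := by
    apply div_lt_div_of_pos_left hr (by positivity); linarith
  have hxs : x ∈ ball x r := mem_ball_self hr
  have hlip : ∀ z ∈ ball x r, ‖f z - f x‖ ≤ 2 * m / r * ‖z - x‖ := by
    intro z hz
    have := Complex.dist_le_div_mul_dist_of_mapsTo_ball (R₂ := 2 * m) hf (by
      intro w hw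
      rw [mem_closedBall, dist_eq_norm]
      have h1 := hfb w hw
      have h2 := hfb x hxs
      have h3 := norm_sub_le (f w) (f x)
      linarith) hz
    simpa only [dist_eq_norm] using this
  have hnorm : ∀ t ∈ Set.Icc (0 : ℝ) h, ‖(t : ℂ)‖ < r / (2 * m) := by
    intro t ht
    rw [Complex.norm_real, Real.norm_of_nonneg ht.1]
    linarith [ht.2]
  have hder : ∀ t ∈ Set.Icc (0 : ℝ) h,
      HasDerivAt (fun s : ℝ => φ (s : ℂ)) (f (φ (t : ℂ))) t := by
    intro t ht
    have := (hφ t (hnorm t ht)).2.scomp t (Complex.ofRealCLM.hasDerivAt (x := t))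
    simpa [Function.comp_def] using this
  have hmem : ∀ t ∈ Set.Icc (0 : ℝ) h, φ (t : ℂ) ∈ ball x r :=
    fun t ht => (hφ t (hnorm t ht)).1
  have hdist : ∀ t ∈ Set.Icc (0 : ℝ) h, ‖φ (t : ℂ) - x‖ ≤ m * t := by
    intro t ht
    have := norm_image_sub_le_of_norm_deriv_right_le_segment
      (f := fun s : ℝ => φ (s : ℂ)) (C := m)
      (fun t ht => (hder t ht).continuousAt.continuousWithinAt)
      (fun t ht => (hder t (Set.Ico_subset_Icc_self ht)).hasDerivWithinAt)
      (fun t ht => hfb _ (hmem t (Set.Ico_subset_Icc_self ht))) t ht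
    simpa [hφ0] using this
  have hg : ∀ t ∈ Set.Icc (0 : ℝ) h,
      HasDerivAt (fun s : ℝ => φ (s : ℂ) - x - s • f x) (f (φ (t : ℂ)) - f x) t := by
    intro t ht
    have h1 := (hasDerivAt_id t).smul_const (f x)
    rw [one_smul] at h1
    exact ((hder t ht).sub_const x).sub h1
  have key : ‖φ (h : ℂ) - x - h • f x‖ ≤ m ^ 2 / r * h ^ 2 := by
    refine image_norm_le_of_norm_deriv_right_le_deriv_boundary
      (f := fun s : ℝ => φ (s : ℂ) - x - s • f x)
      (B := fun s => m ^ 2 / r * s ^ 2) (B' := fun s => m ^ 2 / r * (2 * s))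
      (fun t ht => (hg t ht).continuousAt.continuousWithinAt)
      (fun t ht => (hg t (Set.Ico_subset_Icc_self ht)).hasDerivWithinAt)
      (by simp [hφ0]) ?_ ?_ (Set.right_mem_Icc.2 hh.le)
    · intro s
      simpa using (hasDerivAt_pow 2 s).const_mul (m ^ 2 / r)
    · intro t ht
      have ht' := Set.Ico_subset_Icc_self ht
      calc _ ≤ 2 * m / r * ‖φ (t : ℂ) - x‖ := hlip _ (hmem t ht')
        _ ≤ 2 * m / r * (m * t) := by gcongr; exact hdist t ht'
        _ = _ := by ring
  have heq : h • (fθ x - f x) = ((x + h • fθ x) - φ (h : ℂ)) + (φ (h : ℂ) - x - h • f x) := by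
    rw [smul_sub]; abel
  have hfin : h * ‖fθ x - f x‖ ≤ ‖(x + h • fθ x) - φ (h : ℂ)‖ + m ^ 2 / r * h ^ 2 := by
    have h1 : ‖h • (fθ x - f x)‖ = h * ‖fθ x - f x‖ := by
      rw [norm_smul, Real.norm_of_nonneg hh.le]
    rw [← h1, heq]
    exact (norm_add_le _ _).trans (by gcongr)
  have h2 : ‖fθ x - f x‖ ≤ (‖(x + h • fθ x) - φ (h : ℂ)‖ + m ^ 2 / r * h ^ 2) / h := by
    rw [le_div_iff₀ hh]; linarith
  refine h2.trans_eq ?_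
  rw [add_div, add_comm]
  congr 1
  field_simp
end

section
/- Let n ≥ 1 and let J be the standard 2n×2n real symplectic structure matrix (in block form, J = [[0, I_n], [−I_n, 0]]). Let K be a natural number, let M, N : ℝ → Mat_{2n}(ℝ) be families of matrices, and let A ∈ Mat_{2n}(ℝ). Assume: (i) M(h)ᵀ · J · M(h) = J for all h; (ii) N(h)ᵀ · J · N(h) = J for all h; (iii) h^{−(K+2)}·(M(h) − N(h)) → A as h → 0 (h ≠ 0); (iv) N(h) → I (the identity matrix) as h → 0. Then Aᵀ · J + J · A = 0. -/
open Filter Topology Matrix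

theorem stmt5 {n : ℕ} (hn : 1 ≤ n) (K : ℕ)
    (M N : ℝ → Matrix (Fin n ⊕ Fin n) (Fin n ⊕ Fin n) ℝ)
    (A J : Matrix (Fin n ⊕ Fin n) (Fin n ⊕ Fin n) ℝ)
    (hJ : J = Matrix.fromBlocks 0 1 (-1) 0)
    (hM : ∀ h : ℝ, (M h)ᵀ * J * M h = J)
    (hN : ∀ h : ℝ, (N h)ᵀ * J * N h = J)
    (hMN : Tendsto (fun h : ℝ => (h ^ (K + 2))⁻¹ • (M h - N h)) (𝓝[≠] 0) (𝓝 A))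
    (hNI : Tendsto N (𝓝 0) (𝓝 1)) :
    Aᵀ * J + J * A = 0 := by
  have hN' : Tendsto N (𝓝[≠] 0) (𝓝 1) := hNI.mono_left nhdsWithin_le_nhds
  have hp : Tendsto (fun h : ℝ => h ^ (K + 2)) (𝓝[≠] 0) (𝓝 0) := by
    have h0 : Tendsto (fun h : ℝ => h ^ (K + 2)) (𝓝 0) (𝓝 ((0 : ℝ) ^ (K + 2))) :=
      (continuous_pow (K + 2)).tendsto 0
    rw [zero_pow (by omega)] at h0
    exact h0.mono_left nhdsWithin_le_nhds
  have hM' : Tendsto M (𝓝[≠] 0) (𝓝 1) := by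
    have h1 := hN'.add (hp.smul hMN)
    rw [zero_smul, add_zero] at h1
    refine h1.congr' ?_
    filter_upwards [self_mem_nhdsWithin] with h hh
    have hh' : h ^ (K + 2) ≠ 0 := pow_ne_zero _ hh
    rw [smul_smul, mul_inv_cancel₀ hh', one_smul]
    abel
  have hT : Tendsto (fun h : ℝ => ((h ^ (K + 2))⁻¹ • (M h - N h))ᵀ) (𝓝[≠] 0) (𝓝 Aᵀ) :=
    ((continuous_id.matrix_transpose).tendsto A).comp hMN
  have hNT : Tendsto (fun h : ℝ => (N h)ᵀ) (𝓝[≠] 0) (𝓝 (1ᵀ)) :=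
    ((continuous_id.matrix_transpose).tendsto 1).comp hN'
  have key := ((hT.mul (tendsto_const_nhds (x := J))).mul hM').add
    ((hNT.mul (tendsto_const_nhds (x := J))).mul hMN)
  rw [transpose_one, mul_one, one_mul] at key
  refine tendsto_nhds_unique key (tendsto_const_nhds.congr fun h => ?_)
  have e : (M h - N h)ᵀ * J * M h + (N h)ᵀ * J * (M h - N h) = 0 := by
    rw [transpose_sub, sub_mul, sub_mul, mul_sub, hM, hN]
    abel
  rw [transpose_smul, smul_mul_assoc, smul_mul_assoc, mul_smul_comm, ← smul_add, e, smul_zero]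
end

section
/- Let n ≥ 1 and let J be the standard 2n×2n real symplectic structure matrix (in block form, J = [[0, I_n], [−I_n, 0]]). Let k be a natural number, let M, N : ℝ → Mat_{2n}(ℝ) be families of matrices, and let A, B ∈ Mat_{2n}(ℝ). Assume: (i) M(h)ᵀ · J · M(h) = J for all h; (ii) h^{−(k+1)}·(N(h)ᵀ · J · N(h) − J) → B as h → 0 (h ≠ 0); (iii) h^{−(k+1)}·(M(h) − N(h)) → A as h → 0 (h ≠ 0); (iv) N(h) → I (the identity matrix) as h → 0. Then Aᵀ · J + J · A = −B; in particular, if B ≠ 0 then J·A is not a symmetric matrix. -/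
open Filter Topology Matrix

theorem stmt6 {n : ℕ} (hn : 1 ≤ n) (k : ℕ)
    (M N : ℝ → Matrix (Fin n ⊕ Fin n) (Fin n ⊕ Fin n) ℝ)
    (A B J : Matrix (Fin n ⊕ Fin n) (Fin n ⊕ Fin n) ℝ)
    (hJ : J = Matrix.fromBlocks 0 1 (-1) 0)
    (hM : ∀ h : ℝ, (M h)ᵀ * J * M h = J)
    (hNdef : Tendsto (fun h : ℝ => (h ^ (k + 1))⁻¹ • ((N h)ᵀ * J * N h - J)) (𝓝[≠] 0) (𝓝 B))
    (hMN : Tendsto (fun h : ℝ => (h ^ (k + 1))⁻¹ • (M h - N h)) (𝓝[≠] 0) (𝓝 A))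
    (hNI : Tendsto N (𝓝 0) (𝓝 1)) :
    Aᵀ * J + J * A = -B ∧ (B ≠ 0 → ¬ (J * A).IsSymm) := by
  have hN' : Tendsto N (𝓝[≠] 0) (𝓝 1) := hNI.mono_left nhdsWithin_le_nhds
  have hpow : Tendsto (fun h : ℝ => h ^ (k + 1)) (𝓝[≠] 0) (𝓝 0) := by
    have hc : Continuous (fun h : ℝ => h ^ (k + 1)) := by fun_prop
    have ht := hc.tendsto 0
    simp only [ne_eq, Nat.add_eq_zero_iff, one_ne_zero, and_false, not_false_eq_true,
      zero_pow] at ht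
    exact ht.mono_left nhdsWithin_le_nhds
  have hne : ∀ᶠ h : ℝ in 𝓝[≠] 0, h ≠ 0 := eventually_mem_nhdsWithin
  have hM' : Tendsto M (𝓝[≠] 0) (𝓝 1) := by
    have h1 := hN'.add (hpow.smul hMN)
    rw [zero_smul, add_zero] at h1
    refine h1.congr' ?_
    filter_upwards [hne] with h hh
    rw [smul_smul, mul_inv_cancel₀ (pow_ne_zero _ hh), one_smul]
    abel
  have hT : ∀ {F : ℝ → Matrix (Fin n ⊕ Fin n) (Fin n ⊕ Fin n) ℝ}
      {X : Matrix (Fin n ⊕ Fin n) (Fin n ⊕ Fin n) ℝ},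
      Tendsto F (𝓝[≠] 0) (𝓝 X) → Tendsto (fun h => (F h)ᵀ) (𝓝[≠] 0) (𝓝 Xᵀ) := by
    intro F X hF
    exact ((continuous_id.matrix_transpose).tendsto X).comp hF
  have key : Aᵀ * J + J * A = -B := by
    have h2 := (((hT hMN).mul_const J).mul hM').add (((hT hN').mul_const J).mul hMN)
    rw [mul_one, transpose_one, one_mul] at h2
    refine tendsto_nhds_unique (h2.congr ?_) hNdef.neg
    intro h
    have e := hM h
    rw [transpose_smul, transpose_sub, smul_mul_assoc, smul_mul_assoc, mul_smul_comm,
      ← smul_add, ← smul_neg]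
    congr 1
    rw [sub_mul, sub_mul, mul_sub, e]
    abel
  refine ⟨key, fun hB hs => hB ?_⟩
  have hJt : Jᵀ = -J := by
    rw [hJ, fromBlocks_transpose, fromBlocks_neg]
    simp
  have h3 : (J * A)ᵀ = J * A := hs
  rw [transpose_mul, hJt, mul_neg] at h3
  rw [← h3, add_neg_cancel] at key
  exact neg_eq_zero.mp key.symm
end

section
/- Let E = ℝ^D, let S ≥ 1 and k ≥ 0 be integers, let x ∈ E, ρ > 0 and c ≥ 0. Let φ : ℝ → E → E satisfy φ(0, y) = y and φ(s + t, y) = φ(s, φ(t, y)) for all s, t ∈ ℝ and y ∈ E, with t ↦ φ(t, x) continuous at t = 0. Let g : E → E be continuous on the closed ball of radius ρ around x, and let Ψ : ℝ → E → E satisfy the near-identity Lipschitz condition ‖(Ψ_h(y) − Ψ_h(z)) − (y − z)‖ ≤ c·|h|·‖y − z‖ for all h ∈ ℝ and y, z ∈ E. Suppose there is a function ε : ℝ → ℝ with ε(h) = o(h^{k+1}) as h → 0 such that ‖φ(h, y) − Ψ_h(y) − h^{k+1}·g(y)‖ ≤ ε(h) for all h ∈ ℝ and all y in the closed ball of radius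 ρ around x. Then φ(S·h, x) − Ψ_h^{∘S}(x) − S·h^{k+1}·g(x) = o(h^{k+1}) as h → 0, where Ψ_h^{∘S} denotes the S-fold composition of Ψ_h with itself. -/
open Filter Topology Asymptotics

theorem stmt7 {D : ℕ} (S : ℕ) (hS : 1 ≤ S) (k : ℕ)
    (x : Fin D → ℝ) (ρ c : ℝ) (hρ : 0 < ρ) (hc : 0 ≤ c)
    (φ : ℝ → (Fin D → ℝ) → (Fin D → ℝ))
    (hφ0 : ∀ y, φ 0 y = y)
    (hφadd : ∀ s t : ℝ, ∀ y, φ (s + t) y = φ s (φ t y))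
    (hφcont : ContinuousAt (fun t => φ t x) 0)
    (g : (Fin D → ℝ) → (Fin D → ℝ))
    (hg : ContinuousOn g (Metric.closedBall x ρ))
    (Ψ : ℝ → (Fin D → ℝ) → (Fin D → ℝ))
    (hΨ : ∀ (h : ℝ) (y z : Fin D → ℝ), ‖(Ψ h y - Ψ h z) - (y - z)‖ ≤ c * |h| * ‖y - z‖)
    (ε : ℝ → ℝ)
    (hε : ε =o[𝓝 0] fun h : ℝ => h ^ (k + 1))
    (hloc : ∀ h : ℝ, ∀ y ∈ Metric.closedBall x ρ,
      ‖φ h y - Ψ h y - h ^ (k + 1) • g y‖ ≤ ε h) :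
    (fun h : ℝ => φ (S * h) x - (Ψ h)^[S] x - ((S : ℝ) * h ^ (k + 1)) • g x)
      =o[𝓝 0] fun h : ℝ => h ^ (k + 1) := by
  clear hS
  induction S with
  | zero =>
    simp [hφ0]
  | succ n ih =>
    have hy : Tendsto (fun h : ℝ => φ (n * h) x) (𝓝 0) (𝓝 x) := by
      have h1 : Tendsto (fun h : ℝ => (n : ℝ) * h) (𝓝 0) (𝓝 0) := by
        have : Continuous (fun h : ℝ => (n : ℝ) * h) := by fun_prop
        simpa using this.tendsto 0
      have h2 : Tendsto (fun t => φ t x) (𝓝 0) (𝓝 x) := by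
        have := hφcont.tendsto
        rwa [hφ0] at this
      exact h2.comp h1
    have hball : ∀ᶠ h : ℝ in 𝓝 0, φ (n * h) x ∈ Metric.closedBall x ρ :=
      hy (Metric.closedBall_mem_nhds x hρ)
    have hgx : ContinuousAt g x := hg.continuousAt (Metric.closedBall_mem_nhds x hρ)
    have t1 : (fun h : ℝ => φ h (φ (n * h) x) - Ψ h (φ (n * h) x) - h ^ (k + 1) • g (φ (n * h) x))
        =o[𝓝 0] fun h : ℝ => h ^ (k + 1) := by
      refine IsBigO.trans_isLittleO (IsBigO.of_bound 1 ?_) hε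
      filter_upwards [hball] with h hh
      rw [one_mul]
      exact (hloc h _ hh).trans (le_abs_self _)
    have t2 : (fun h : ℝ => h ^ (k + 1) • (g (φ (n * h) x) - g x))
        =o[𝓝 0] fun h : ℝ => h ^ (k + 1) := by
      have h1 : (fun h : ℝ => g (φ (n * h) x) - g x) =o[𝓝 0] fun _ : ℝ => (1 : ℝ) := by
        rw [isLittleO_one_iff]
        have := (hgx.tendsto.comp hy).sub_const (g x)
        simpa using this
      simpa using (isBigO_refl (fun h : ℝ => h ^ (k + 1)) (𝓝 0)).smul_isLittleO h1
    have he : (fun h : ℝ => φ (n * h) x - (Ψ h)^[n] x) =O[𝓝 0] fun h : ℝ => h ^ (k + 1) := by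
      have h1 : (fun h : ℝ => ((n : ℝ) * h ^ (k + 1)) • g x) =O[𝓝 0] fun h : ℝ => h ^ (k + 1) := by
        refine IsBigO.of_bound (n * ‖g x‖) (Eventually.of_forall fun h => ?_)
        rw [norm_smul, norm_mul, Real.norm_natCast]
        exact le_of_eq (by ring)
      exact (ih.isBigO.add h1).congr_left fun h => by abel
    have t3 : (fun h : ℝ => (Ψ h (φ (n * h) x) - Ψ h ((Ψ h)^[n] x)) - (φ (n * h) x - (Ψ h)^[n] x))
        =o[𝓝 0] fun h : ℝ => h ^ (k + 1) := by
      have h1 : (fun h : ℝ => h) =o[𝓝 0] fun _ : ℝ => (1 : ℝ) := by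
        rw [isLittleO_one_iff]
        exact tendsto_id
      have h2 := h1.smul_isBigO he
      simp only [smul_eq_mul, one_mul] at h2
      refine IsBigO.trans_isLittleO (IsBigO.of_bound c (Eventually.of_forall fun h => ?_)) h2
      rw [norm_smul, Real.norm_eq_abs, ← mul_assoc]
      exact hΨ h _ _
    refine (((t1.add t2).add t3).add ih).congr_left fun h => ?_
    have e1 : φ ((n + 1 : ℕ) * h) x = φ h (φ (n * h) x) := by
      rw [← hφadd]
      congr 1
      push_cast
      ring
    rw [e1, Function.iterate_succ_apply']
    push_cast
    module
end

section
/- Let D ≥ 1 and equip ℂ^D with the supremum (ℓ∞) norm. Fix a Runge–Kutta method with I stages and real coefficients a_{ij} (1 ≤ i, j ≤ I), and set κ := max_{1≤i≤I} Σ_{j=1}^I |a_{ij}|; assume κ > 0. Let K ⊆ ℂ^D, r, m > 0, let g : ℂ^D → ℂ^D be holomorphic on the open r-thickening B(K, r) with ‖g(z)‖ ≤ m there, let x ∈ K, and let h ∈ ℂ with |h| ≤ r/(4κm). Then there exists a unique tuple v = (v_1, …, v_I) of points of ℂ^D such that ‖v_i − x‖ ≤ |h|·κ·m for every i and the stage equations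 v_i = x + h·Σ_{j=1}^I a_{ij}·g(v_j) hold for every i. -/
open Filter Topology Metric

theorem stmt9 {D I : ℕ} (hD : 1 ≤ D) (hI : 1 ≤ I)
    (a : Fin I → Fin I → ℝ) (κ : ℝ)
    (hκ : κ = ⨆ i : Fin I, ∑ j : Fin I, |a i j|) (hκpos : 0 < κ)
    (K : Set (Fin D → ℂ)) (r m : ℝ) (hr : 0 < r) (hm : 0 < m)
    (g : (Fin D → ℂ) → (Fin D → ℂ))
    (hg : DifferentiableOn ℂ g (⋃ y ∈ K, ball y r))
    (hgb : ∀ z ∈ ⋃ y ∈ K, ball y r, ‖g z‖ ≤ m)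
    (x : Fin D → ℂ) (hx : x ∈ K)
    (h : ℂ) (hh : ‖h‖ ≤ r / (4 * κ * m)) :
    ∃! v : Fin I → (Fin D → ℂ),
      (∀ i, ‖v i - x‖ ≤ ‖h‖ * κ * m) ∧
      (∀ i, v i = x + h • ∑ j : Fin I, a i j • g (v j)) := by
  have hρ : ‖h‖ * κ * m ≤ r / 4 := by
    rw [le_div_iff₀ (by positivity)] at hh
    linarith
  have hρ0 : 0 ≤ ‖h‖ * κ * m := by positivity
  have hsub : ball x r ⊆ ⋃ y ∈ K, ball y r := Set.subset_biUnion_of_mem (u := fun y => ball y r) hx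
  have hrow : ∀ i, ∑ j, |a i j| ≤ κ := by
    intro i
    rw [hκ]
    exact le_ciSup (f := fun i => ∑ j, |a i j|) (Set.finite_range _).bddAbove i
  -- the linear estimate
  have key : ∀ (w : Fin I → (Fin D → ℂ)) (M : ℝ), 0 ≤ M → (∀ j, ‖w j‖ ≤ M) → ∀ i,
      ‖h • ∑ j, a i j • w j‖ ≤ ‖h‖ * κ * M := by
    intro w M hM hw i
    rw [norm_smul, mul_assoc]
    refine mul_le_mul_of_nonneg_left ?_ (norm_nonneg _)
    calc ‖∑ j, a i j • w j‖ ≤ ∑ j, |a i j| * M := by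
          refine norm_sum_le_of_le _ fun j _ => ?_
          rw [norm_smul, Real.norm_eq_abs]
          exact mul_le_mul_of_nonneg_left (hw j) (abs_nonneg _)
      _ = (∑ j, |a i j|) * M := by rw [Finset.sum_mul]
      _ ≤ κ * M := mul_le_mul_of_nonneg_right (hrow i) hM
  -- the Lipschitz estimate for g, from the Schwarz lemma
  have lip : ∀ u w : Fin D → ℂ, ‖u - x‖ ≤ ‖h‖ * κ * m → ‖w - x‖ ≤ ‖h‖ * κ * m →
      ‖g u - g w‖ ≤ (2 * m) / (3 * r / 4) * ‖u - w‖ := by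
    intro u w hu hw
    have hb : ball w (3 * r / 4) ⊆ ball x r := by
      apply ball_subset_ball'
      rw [dist_eq_norm]
      linarith
    have hwx : w ∈ ball w (3 * r / 4) := mem_ball_self (by positivity)
    have := Complex.dist_le_div_mul_dist_of_mapsTo_ball (f := g) (c := w) (z := u)
      (R₁ := 3 * r / 4) (R₂ := 2 * m) (hg.mono (hb.trans hsub))
      (by
        intro z hz
        rw [mem_closedBall, dist_eq_norm]
        have h1 := hgb z (hsub (hb hz))
        have h2 := hgb w (hsub (hb hwx))
        have h3 := norm_sub_le (g z) (g w)
        linarith)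
      (by
        rw [mem_ball, dist_eq_norm]
        have h3 := norm_sub_le (u - x) (w - x)
        rw [sub_sub_sub_cancel_right] at h3
        linarith)
    simpa only [dist_eq_norm] using this
  let s : Set (Fin I → Fin D → ℂ) := {v | ∀ i, ‖v i - x‖ ≤ ‖h‖ * κ * m}
  let F : (Fin I → Fin D → ℂ) → (Fin I → Fin D → ℂ) :=
    fun v i => x + h • ∑ j : Fin I, a i j • g (v j)
  have hsc : IsClosed s := by
    simp only [s, Set.setOf_forall]
    exact isClosed_iInter fun i => isClosed_le (by fun_prop) continuous_const
  have hsF : Set.MapsTo F s s := by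
    intro v hv i
    simp only [F, add_sub_cancel_left]
    refine key (fun j => g (v j)) m hm.le (fun j => hgb _ (hsub ?_)) i
    rw [mem_ball, dist_eq_norm]
    have := hv j
    linarith
  have contr : ∀ u ∈ s, ∀ w ∈ s, dist (F u) (F w) ≤ 2 / 3 * dist u w := by
    intro u hu w hw
    rw [dist_pi_le_iff (by positivity)]
    intro i
    have e : F u i - F w i = h • ∑ j, a i j • (g (u j) - g (w j)) := by
      simp only [F, add_sub_add_left_eq_sub, ← smul_sub, ← Finset.sum_sub_distrib]
    rw [dist_eq_norm, e]
    refine (key _ ((2 * m) / (3 * r / 4) * dist u w) (by positivity) (fun j => ?_) i).trans ?_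
    · refine (lip _ _ (hu j) (hw j)).trans ?_
      refine mul_le_mul_of_nonneg_left ?_ (by positivity)
      rw [← dist_eq_norm]
      exact dist_le_pi_dist u w j
    · rw [← mul_assoc]
      refine mul_le_mul_of_nonneg_right ?_ dist_nonneg
      have e2 : ‖h‖ * κ * (2 * m / (3 * r / 4)) = (‖h‖ * κ * m) * (8 / (3 * r)) := by
        field_simp
        ring
      rw [e2]
      calc (‖h‖ * κ * m) * (8 / (3 * r)) ≤ (r / 4) * (8 / (3 * r)) :=
            mul_le_mul_of_nonneg_right hρ (by positivity)
        _ = 2 / 3 := by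
          field_simp
          norm_num
  have hC : ContractingWith (2 / 3 : NNReal) (hsF.restrict F s s) := by
    refine ⟨?_, LipschitzWith.of_dist_le_mul ?_⟩
    · rw [← NNReal.coe_lt_coe]
      norm_num
    · intro u w
      have := contr u u.2 w w.2
      simpa [Subtype.dist_eq] using this
  have hx0 : (fun _ => x : Fin I → Fin D → ℂ) ∈ s := by
    intro i
    simpa using hρ0
  obtain ⟨v, hvs, hvF, -⟩ := hC.exists_fixedPoint' hsc.isComplete hsF hx0 (edist_ne_top _ _)
  refine ⟨v, ⟨hvs, fun i => (congrFun hvF i).symm⟩, ?_⟩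
  rintro w ⟨hw, hwF⟩
  have hwF' : F w = w := funext fun i => (hwF i).symm
  have h1 := contr w hw v hvs
  rw [hwF', hvF] at h1
  have h2 : dist w v ≤ 0 := by linarith
  exact dist_le_zero.1 h2
end

section
/- Let D ≥ 1 and equip ℂ^D with the supremum (ℓ∞) norm. Fix a Runge–Kutta method with I stages and real coefficients a_{ij} (1 ≤ i, j ≤ I), and set κ := max_{1≤i≤I} Σ_{j=1}^I |a_{ij}|; assume κ > 0. Let K ⊆ ℂ^D, r, m > 0, let g, ĝ : ℂ^D → ℂ^D be holomorphic on the open r-thickening B(K, r) with ‖g(z)‖ ≤ m and ‖ĝ(z)‖ ≤ m there, let x ∈ K, and let h ∈ ℂ with 0 < |h| ≤ r/(4κm). Let u = (u_1, …, u_I) and v = (v_1, …, v_I) satisfy ‖u_i − x‖ ≤ |h|·κ·m, ‖v_i − x‖ ≤ |h|·κ·m, u_i = x + h·Σ_j a_{ij}·ĝ(u_j), and v_i = x + h·Σ_j a_{ij}·g(v_j) for all i. If M ≥ 0 satisfies ‖ĝ(z) − g(z)‖ ≤ M for all z ∈ B(K, |h|·κ·m), then max_{1≤i≤I} ‖u_i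 − v_i‖ ≤ 2κ·|h|·M. -/
open Filter Topology Metric

theorem stmt10 {D I : ℕ} (hD : 1 ≤ D) (hI : 1 ≤ I)
    (a : Fin I → Fin I → ℝ) (κ : ℝ)
    (hκ : κ = ⨆ i : Fin I, ∑ j : Fin I, |a i j|) (hκpos : 0 < κ)
    (K : Set (Fin D → ℂ)) (r m : ℝ) (hr : 0 < r) (hm : 0 < m)
    (g ghat : (Fin D → ℂ) → (Fin D → ℂ))
    (hg : DifferentiableOn ℂ g (⋃ y ∈ K, ball y r))
    (hghat : DifferentiableOn ℂ ghat (⋃ y ∈ K, ball y r))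
    (hgb : ∀ z ∈ ⋃ y ∈ K, ball y r, ‖g z‖ ≤ m)
    (hghatb : ∀ z ∈ ⋃ y ∈ K, ball y r, ‖ghat z‖ ≤ m)
    (x : Fin D → ℂ) (hx : x ∈ K)
    (h : ℂ) (hh0 : 0 < ‖h‖) (hh : ‖h‖ ≤ r / (4 * κ * m))
    (u v : Fin I → (Fin D → ℂ))
    (hu1 : ∀ i, ‖u i - x‖ ≤ ‖h‖ * κ * m)
    (hv1 : ∀ i, ‖v i - x‖ ≤ ‖h‖ * κ * m)
    (hu2 : ∀ i, u i = x + h • ∑ j : Fin I, a i j • ghat (u j))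
    (hv2 : ∀ i, v i = x + h • ∑ j : Fin I, a i j • g (v j))
    (M : ℝ) (hM : 0 ≤ M)
    (hMb : ∀ z ∈ ⋃ y ∈ K, ball y (‖h‖ * κ * m), ‖ghat z - g z‖ ≤ M) :
    ∀ i, ‖u i - v i‖ ≤ 2 * κ * ‖h‖ * M := by
  have hρ : 0 < ‖h‖ * κ * m := by positivity
  have h4 : 4 * (‖h‖ * κ * m) ≤ r := by
    rw [le_div_iff₀ (by positivity)] at hh
    linarith
  obtain ⟨ρ, hρe⟩ : ∃ ρ, ρ = ‖h‖ * κ * m := ⟨_, rfl⟩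
  rw [← hρe] at hρ h4 hMb hu1 hv1
  have hsub : ball x r ⊆ ⋃ y ∈ K, ball y r := fun z hz => Set.mem_biUnion hx hz
  have hsub' : ball x ρ ⊆ ⋃ y ∈ K, ball y ρ := fun z hz => Set.mem_biUnion hx hz
  have hgd := hg.mono hsub
  have hghd := hghat.mono hsub
  have hcb : closedBall x ρ ⊆ ball x r := closedBall_subset_ball (by linarith)
  have hda : ∀ z ∈ ball x r, DifferentiableAt ℂ g z := fun z hz =>
    (hgd z hz).differentiableAt (isOpen_ball.mem_nhds hz)
  have hMc : ∀ z ∈ closedBall x ρ, ‖ghat z - g z‖ ≤ M := by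
    intro z hz
    have hc : ContinuousOn (fun z => ‖ghat z - g z‖) (closure (ball x ρ)) := by
      rw [closure_ball x hρ.ne']
      exact ((hghd.continuousOn.mono hcb).sub (hgd.continuousOn.mono hcb)).norm
    have := closure_ball x hρ.ne'
    exact le_on_closure (fun y hy => hMb y (hsub' hy)) hc continuousOn_const (this ▸ hz)
  have hder : ∀ z ∈ closedBall x ρ, ‖fderiv ℂ g z‖ ≤ m / (2 * ρ) := by
    intro z hz
    refine ContinuousLinearMap.opNorm_le_bound _ (by positivity) fun w => ?_
    rcases eq_or_ne w 0 with rfl | hw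
    · simp
    have hw' : 0 < ‖w‖ := norm_pos_iff.2 hw
    have hs : 0 < 2 * ρ / ‖w‖ := by positivity
    have hin : ∀ t ∈ closedBall (0 : ℂ) (2 * ρ / ‖w‖), z + t • w ∈ ball x r := by
      intro t ht
      rw [mem_closedBall_zero_iff, le_div_iff₀ hw', ← norm_smul] at ht
      rw [mem_closedBall_iff_norm] at hz
      rw [mem_ball_iff_norm]
      calc ‖z + t • w - x‖ = ‖(z - x) + t • w‖ := by congr 1; abel
        _ ≤ ‖z - x‖ + ‖t • w‖ := norm_add_le _ _
        _ < r := by linarith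
    have hline : ∀ t : ℂ, HasDerivAt (fun t : ℂ => z + t • w) w t := fun t => by
      simpa using ((hasDerivAt_id t).smul_const w).const_add z
    have hd : DifferentiableOn ℂ (fun t : ℂ => g (z + t • w))
        (closedBall 0 (2 * ρ / ‖w‖)) := fun t ht =>
      ((hda _ (hin t ht)).comp t (hline t).differentiableAt).differentiableWithinAt
    have hdc : DiffContOnCl ℂ (fun t : ℂ => g (z + t • w)) (ball 0 (2 * ρ / ‖w‖)) :=
      hd.diffContOnCl_ball subset_rfl
    have hb := Complex.norm_deriv_le_of_forall_mem_sphere_norm_le hs hdc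
      (fun t ht => hgb _ (hsub (hin t (sphere_subset_closedBall ht))))
    have he : HasDerivAt (fun t : ℂ => g (z + t • w)) (fderiv ℂ g z w) 0 := by
      have h1 : HasFDerivAt g (fderiv ℂ g z) (z + (0 : ℂ) • w) := by
        simpa using (hda z (hcb hz)).hasFDerivAt
      exact h1.comp_hasDerivAt (0 : ℂ) (hline 0)
    rw [he.deriv] at hb
    calc _ ≤ _ := hb
      _ = _ := by field_simp
  have hlip : ∀ p ∈ closedBall x ρ, ∀ q ∈ closedBall x ρ,
      ‖g p - g q‖ ≤ m / (2 * ρ) * ‖p - q‖ := fun p hp q hq =>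
    (convex_closedBall x ρ).norm_image_sub_le_of_norm_fderiv_le (𝕜 := ℂ)
      (fun z hz => hda z (hcb hz)) hder hq hp
  have hue : ∀ i, u i ∈ closedBall x ρ := fun i => mem_closedBall_iff_norm.2 (hu1 i)
  have hve : ∀ i, v i ∈ closedBall x ρ := fun i => mem_closedBall_iff_norm.2 (hv1 i)
  have : Nonempty (Fin I) := ⟨⟨0, hI⟩⟩
  obtain ⟨i₀, hi₀⟩ := Finite.exists_max (fun i => ‖u i - v i‖)
  have hrow : ∑ j, |a i₀ j| ≤ κ := by
    rw [hκ]
    exact le_ciSup (f := fun i => ∑ j, |a i j|) (Set.finite_range _).bddAbove i₀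
  have hterm : ∀ j, ‖ghat (u j) - g (v j)‖ ≤ M + m / (2 * ρ) * ‖u i₀ - v i₀‖ := by
    intro j
    calc ‖ghat (u j) - g (v j)‖
        = ‖(ghat (u j) - g (u j)) + (g (u j) - g (v j))‖ := by congr 1; abel
      _ ≤ ‖ghat (u j) - g (u j)‖ + ‖g (u j) - g (v j)‖ := norm_add_le _ _
      _ ≤ M + m / (2 * ρ) * ‖u j - v j‖ := add_le_add (hMc _ (hue j)) (hlip _ (hue j) _ (hve j))
      _ ≤ _ := by
        have := hi₀ j
        gcongr
  have hmain : ‖u i₀ - v i₀‖ ≤ ‖h‖ * (κ * (M + m / (2 * ρ) * ‖u i₀ - v i₀‖)) := by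
    have heq : u i₀ - v i₀ = h • ∑ j, a i₀ j • (ghat (u j) - g (v j)) := by
      conv_lhs => rw [hu2 i₀, hv2 i₀]
      simp only [smul_sub, Finset.sum_sub_distrib]
      abel
    calc ‖u i₀ - v i₀‖ = ‖h‖ * ‖∑ j, a i₀ j • (ghat (u j) - g (v j))‖ := by
          rw [← norm_smul, ← heq]
      _ ≤ ‖h‖ * ∑ j, |a i₀ j| * (M + m / (2 * ρ) * ‖u i₀ - v i₀‖) := by
          refine mul_le_mul_of_nonneg_left (norm_sum_le_of_le _ fun j _ => ?_) hh0.le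
          rw [norm_smul, Real.norm_eq_abs]
          exact mul_le_mul_of_nonneg_left (hterm j) (abs_nonneg _)
      _ ≤ _ := by
          rw [← Finset.sum_mul]
          gcongr
  have hhalf : ‖h‖ * (κ * (m / (2 * ρ))) = 1 / 2 := by
    rw [hρe]; field_simp
  have hfin : ‖h‖ * (κ * (M + m / (2 * ρ) * ‖u i₀ - v i₀‖))
      = κ * ‖h‖ * M + 1 / 2 * ‖u i₀ - v i₀‖ := by
    rw [← hhalf]; ring
  intro i
  have := hi₀ i
  linarith
end

section
/- Let D ≥ 1 and equip ℂ^D with the supremum (ℓ∞) norm. Fix a Runge–Kutta method with I stages and real coefficients a_{ij}, b_i (1 ≤ i, j ≤ I), and set κ := max_{1≤i≤I} Σ_{j=1}^I |a_{ij}| and μ := Σ_{i=1}^I |b_i|; assume κ > 0. Let K ⊆ ℂ^D, r, m > 0, let g, ĝ : ℂ^D → ℂ^D be holomorphic on the open r-thickening B(K, r) with ‖g(z)‖ ≤ m and ‖ĝ(z)‖ ≤ m there, let x ∈ K, and let h ∈ ℂ with 0 < |h| ≤ r/(4κm). Let u and v be stage tuples with ‖u_i − x‖ ≤ |h|·κ·m,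 ‖v_i − x‖ ≤ |h|·κ·m, u_i = x + h·Σ_j a_{ij}·ĝ(u_j), and v_i = x + h·Σ_j a_{ij}·g(v_j) for all i, and let Φ_{h,ĝ}(x) := x + h·Σ_i b_i·ĝ(u_i) and Φ_{h,g}(x) := x + h·Σ_i b_i·g(v_i) be the corresponding outputs. If M ≥ 0 satisfies ‖ĝ(z) − g(z)‖ ≤ M for all z ∈ B(K, |h|·κ·m), then ‖Φ_{h,ĝ}(x) − Φ_{h,g}(x)‖ ≤ 2μ·|h|·M. -/
open Filter Topology Metric

theorem lip_aux {D : ℕ} (g : (Fin D → ℂ) → (Fin D → ℂ)) (x : Fin D → ℂ) (r m ρ : ℝ)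
    (hρ : 0 < ρ) (hr : 4 * ρ ≤ r) (hg : DifferentiableOn ℂ g (ball x r))
    (hgb : ∀ z ∈ ball x r, ‖g z‖ ≤ m) (hm : 0 < m)
    (u v : Fin D → ℂ) (hu : u ∈ closedBall x ρ) (hv : v ∈ closedBall x ρ) :
    ‖g u - g v‖ ≤ m / (2 * ρ) * ‖u - v‖ := by
  have hd : ∀ z ∈ closedBall x ρ, DifferentiableAt ℂ g z := by
    intro z hz
    exact hg.differentiableAt (isOpen_ball.mem_nhds (closedBall_subset_ball (by linarith) hz))
  refine Convex.norm_image_sub_le_of_norm_fderiv_le (𝕜 := ℂ) hd ?_ (convex_closedBall x ρ) hv hu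
  intro z hz
  refine ContinuousLinearMap.opNorm_le_bound _ (by positivity) ?_
  intro w
  rcases eq_or_ne w 0 with rfl | hw
  · simp
  have hw' : 0 < ‖w‖ := norm_pos_iff.mpr hw
  have hmem : ∀ t : ℂ, t ∈ closedBall (0 : ℂ) (2 * ρ / ‖w‖) → z + t • w ∈ ball x r := by
    intro t ht
    rw [mem_closedBall, dist_zero_right, le_div_iff₀ hw'] at ht
    rw [mem_closedBall, dist_eq_norm] at hz
    rw [mem_ball, dist_eq_norm]
    have : ‖z + t • w - x‖ ≤ ‖z - x‖ + ‖t • w‖ := by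
      rw [add_sub_right_comm]; exact norm_add_le _ _
    rw [norm_smul] at this
    linarith
  have hlin : Differentiable ℂ (fun t : ℂ => z + t • w) := by fun_prop
  have hR : 0 < 2 * ρ / ‖w‖ := by positivity
  have hdc : DiffContOnCl ℂ (fun t : ℂ => g (z + t • w)) (ball 0 (2 * ρ / ‖w‖)) := by
    apply DifferentiableOn.diffContOnCl
    rw [closure_ball _ hR.ne']
    exact hg.comp hlin.differentiableOn hmem
  have key := Complex.norm_deriv_le_of_forall_mem_sphere_norm_le hR hdc
    (C := m) (fun t ht => hgb _ (hmem t (sphere_subset_closedBall ht)))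
  have hder : HasDerivAt (fun t : ℂ => g (z + t • w)) (fderiv ℂ g z w) 0 := by
    have h1 : HasDerivAt (fun t : ℂ => z + t • w) w 0 := by
      simpa using ((hasDerivAt_id (0 : ℂ)).smul_const w).const_add z
    have h2 : HasFDerivAt g (fderiv ℂ g z) (z + (0 : ℂ) • w) := by
      simpa using (hd z hz).hasFDerivAt
    exact h2.comp_hasDerivAt 0 h1
  rw [hder.deriv] at key
  refine key.trans (le_of_eq ?_)
  field_simp

theorem stmt11 {D I : ℕ} (hD : 1 ≤ D) (hI : 1 ≤ I)
    (a : Fin I → Fin I → ℝ) (b : Fin I → ℝ) (κ μ : ℝ)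
    (hκ : κ = ⨆ i : Fin I, ∑ j : Fin I, |a i j|) (hκpos : 0 < κ)
    (hμ : μ = ∑ i : Fin I, |b i|)
    (K : Set (Fin D → ℂ)) (r m : ℝ) (hr : 0 < r) (hm : 0 < m)
    (g ghat : (Fin D → ℂ) → (Fin D → ℂ))
    (hg : DifferentiableOn ℂ g (⋃ y ∈ K, ball y r))
    (hghat : DifferentiableOn ℂ ghat (⋃ y ∈ K, ball y r))
    (hgb : ∀ z ∈ ⋃ y ∈ K, ball y r, ‖g z‖ ≤ m)
    (hghatb : ∀ z ∈ ⋃ y ∈ K, ball y r, ‖ghat z‖ ≤ m)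
    (x : Fin D → ℂ) (hx : x ∈ K)
    (h : ℂ) (hh0 : 0 < ‖h‖) (hh : ‖h‖ ≤ r / (4 * κ * m))
    (u v : Fin I → (Fin D → ℂ))
    (hu1 : ∀ i, ‖u i - x‖ ≤ ‖h‖ * κ * m)
    (hv1 : ∀ i, ‖v i - x‖ ≤ ‖h‖ * κ * m)
    (hu2 : ∀ i, u i = x + h • ∑ j : Fin I, a i j • ghat (u j))
    (hv2 : ∀ i, v i = x + h • ∑ j : Fin I, a i j • g (v j))
    (M : ℝ) (hM : 0 ≤ M)
    (hMb : ∀ z ∈ ⋃ y ∈ K, ball y (‖h‖ * κ * m), ‖ghat z - g z‖ ≤ M) :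
    ‖(x + h • ∑ i : Fin I, b i • ghat (u i)) - (x + h • ∑ i : Fin I, b i • g (v i))‖
      ≤ 2 * μ * ‖h‖ * M := by
  set ρ := ‖h‖ * κ * m with hρdef
  have hρ : 0 < ρ := by positivity
  have h4 : 4 * ρ ≤ r := by
    rw [le_div_iff₀ (by positivity)] at hh
    rw [hρdef]; linarith
  have hsub : ∀ s : ℝ, ball x s ⊆ ⋃ y ∈ K, ball y s := fun s z hz =>
    Set.mem_biUnion hx hz
  have hu : ∀ i, u i ∈ closedBall x ρ := fun i => by
    rw [mem_closedBall, dist_eq_norm]; exact hu1 i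
  have hv : ∀ i, v i ∈ closedBall x ρ := fun i => by
    rw [mem_closedBall, dist_eq_norm]; exact hv1 i
  have hcl : closedBall x ρ ⊆ ball x r := closedBall_subset_ball (by linarith)
  have hMc : ∀ z ∈ closedBall x ρ, ‖ghat z - g z‖ ≤ M := by
    intro z hz
    have hcb := closure_ball x hρ.ne'
    have hc : ContinuousOn (fun z => ‖ghat z - g z‖) (closure (ball x ρ)) := by
      rw [hcb]
      exact ((hghat.continuousOn.sub hg.continuousOn).norm).mono (hcl.trans (hsub r))
    exact le_on_closure (fun z hz => hMb z (hsub ρ hz)) hc continuousOn_const (hcb ▸ hz)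
  haveI : Nonempty (Fin I) := ⟨⟨0, hI⟩⟩
  obtain ⟨i₀, hi₀⟩ := Finite.exists_max (fun i => ‖u i - v i‖)
  set Δ := ‖u i₀ - v i₀‖ with hΔ
  have hdiff : ∀ j, ‖ghat (u j) - g (v j)‖ ≤ M + m / (2 * ρ) * Δ := by
    intro j
    have h1 := hMc _ (hu j)
    have h2 := lip_aux g x r m ρ hρ h4 (hg.mono (hsub r)) (fun z hz => hgb z (hsub r hz)) hm
      (u j) (v j) (hu j) (hv j)
    have h3 : m / (2 * ρ) * ‖u j - v j‖ ≤ m / (2 * ρ) * Δ :=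
      mul_le_mul_of_nonneg_left (hi₀ j) (by positivity)
    have h4 := norm_sub_le_norm_sub_add_norm_sub (ghat (u j)) (g (u j)) (g (v j))
    linarith
  have hsum : ∀ c : Fin I → ℝ, ‖(x + h • ∑ i, c i • ghat (u i)) - (x + h • ∑ i, c i • g (v i))‖
      ≤ ‖h‖ * ((∑ i, |c i|) * (M + m / (2 * ρ) * Δ)) := by
    intro c
    rw [add_sub_add_left_eq_sub, ← smul_sub, ← Finset.sum_sub_distrib, norm_smul]
    refine mul_le_mul_of_nonneg_left ?_ (norm_nonneg _)
    rw [Finset.sum_mul]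
    refine norm_sum_le_of_le _ fun i _ => ?_
    rw [← smul_sub, norm_smul, Real.norm_eq_abs]
    exact mul_le_mul_of_nonneg_left (hdiff i) (abs_nonneg _)
  have hΔ0 : 0 ≤ Δ := norm_nonneg _
  have hL0 : 0 ≤ M + m / (2 * ρ) * Δ := by positivity
  have hL : m / (2 * ρ) * (‖h‖ * κ) = 1 / 2 := by
    rw [hρdef]; field_simp
  have hκi : ∑ j, |a i₀ j| ≤ κ := by
    rw [hκ]; exact le_ciSup (f := fun i => ∑ j, |a i j|) (Set.finite_range _).bddAbove i₀
  have hΔle : Δ ≤ ‖h‖ * (κ * (M + m / (2 * ρ) * Δ)) := by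
    have h1 := hsum (a i₀)
    rw [← hu2, ← hv2] at h1
    exact h1.trans (mul_le_mul_of_nonneg_left (mul_le_mul_of_nonneg_right hκi hL0)
      (norm_nonneg _))
  have hLΔ : m / (2 * ρ) * Δ ≤ M := by
    have h1 : m / (2 * ρ) * Δ ≤ m / (2 * ρ) * (‖h‖ * (κ * (M + m / (2 * ρ) * Δ))) :=
      mul_le_mul_of_nonneg_left hΔle (by positivity)
    have h2 : m / (2 * ρ) * (‖h‖ * (κ * (M + m / (2 * ρ) * Δ)))
        = 1 / 2 * (M + m / (2 * ρ) * Δ) := by rw [← hL]; ring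
    linarith
  have hμ0 : 0 ≤ ∑ i, |b i| := Finset.sum_nonneg fun i _ => abs_nonneg _
  calc _ ≤ ‖h‖ * ((∑ i, |b i|) * (M + m / (2 * ρ) * Δ)) := hsum b
    _ ≤ ‖h‖ * ((∑ i, |b i|) * (M + M)) := by gcongr
    _ = 2 * μ * ‖h‖ * M := by rw [hμ]; ring
end

section
/- Let D ≥ 1 and equip ℂ^D with the supremum (ℓ∞) norm. Let h₁ > 0, C ≥ 0, and let F : ℂ → ℂ^D be holomorphic on the open disk {z ∈ ℂ : |z| < h₁} with F(0) = 0 and ‖F(z)‖ ≤ C for all z in that disk. Then for every h ∈ ℂ with 0 < |h| < h₁, ‖F′(0)‖ ≤ ‖F(h)‖/|h| + C·|h| / (h₁·(h₁ − |h|)). -/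
open Filter Topology Metric

theorem stmt12 {D : ℕ} (hD : 1 ≤ D) (h₁ C : ℝ) (hh₁ : 0 < h₁) (hC : 0 ≤ C)
    (F : ℂ → Fin D → ℂ)
    (hF : DifferentiableOn ℂ F (ball 0 h₁))
    (hF0 : F 0 = 0)
    (hFb : ∀ z ∈ ball (0 : ℂ) h₁, ‖F z‖ ≤ C) :
    ∀ h : ℂ, 0 < ‖h‖ → ‖h‖ < h₁ →
      ‖deriv F 0‖ ≤ ‖F h‖ / ‖h‖ + C * ‖h‖ / (h₁ * (h₁ - ‖h‖)) := by
  intro h hpos hlt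
  have coef : ∀ n : ℕ, ‖iteratedDeriv n F 0‖ * h₁ ^ n ≤ n.factorial * C := by
    intro n
    have ht : Tendsto (fun R : ℝ => ‖iteratedDeriv n F 0‖ * R ^ n) (𝓝[<] h₁)
        (𝓝 (‖iteratedDeriv n F 0‖ * h₁ ^ n)) :=
      (Continuous.tendsto (by fun_prop) h₁).mono_left nhdsWithin_le_nhds
    refine le_of_tendsto ht ?_
    filter_upwards [Ioo_mem_nhdsLT hh₁] with R hR
    have hsub : closedBall (0 : ℂ) R ⊆ ball 0 h₁ := closedBall_subset_ball hR.2
    have := Complex.norm_iteratedDeriv_le_of_forall_mem_sphere_norm_le n hR.1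
      ((hF.mono hsub).diffContOnCl_ball subset_rfl)
      (fun z hz => hFb z (hsub (sphere_subset_closedBall hz)))
    rwa [le_div_iff₀ (pow_pos hR.1 n)] at this
  have hs := Complex.hasSum_taylorSeries_on_ball hF (z := h) (by simpa using hlt)
  rw [← hasSum_nat_add_iff' 2] at hs
  have hr : ‖h‖ / h₁ < 1 := (div_lt_one hh₁).2 hlt
  have hg := (hasSum_geometric_of_lt_one (by positivity) hr).mul_left (C * (‖h‖ / h₁) ^ 2)
  have hb := hs.norm_le_of_bounded hg (by
    intro n
    have hc := coef (n + 2)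
    have hfac : (0 : ℝ) < (n + 2).factorial := by positivity
    rw [norm_smul, norm_smul, norm_inv, norm_pow, sub_zero, Complex.norm_natCast,
      mul_assoc C, ← pow_add, add_comm 2 n, div_pow, inv_mul_le_iff₀ hfac]
    rw [← le_div_iff₀ (by positivity)] at hc
    calc _ ≤ ‖h‖ ^ (n + 2) * ((n + 2).factorial * C / h₁ ^ (n + 2)) := by gcongr
      _ = _ := by ring)
  simp [Finset.sum_range_succ, hF0] at hb
  have h1 : ‖h‖ * ‖deriv F 0‖ ≤ ‖F h‖ + C * (‖h‖ / h₁) ^ 2 * (1 - ‖h‖ / h₁)⁻¹ := by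
    rw [← norm_smul]
    have := norm_sub_norm_le (h • deriv F 0) (F h)
    rw [norm_sub_rev] at this
    linarith
  have hd : 0 < h₁ - ‖h‖ := sub_pos.2 hlt
  have e : C * (‖h‖ / h₁) ^ 2 * (1 - ‖h‖ / h₁)⁻¹ = ‖h‖ * (C * ‖h‖ / (h₁ * (h₁ - ‖h‖))) := by
    have : 1 - ‖h‖ / h₁ = (h₁ - ‖h‖) / h₁ := by field_simp
    rw [this]
    field_simp
  rw [e] at h1
  refine le_of_mul_le_mul_left (h1.trans_eq ?_) hpos
  rw [mul_add, mul_div_cancel₀ _ hpos.ne']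
end

section
/- Let E be a real vector space, g : E → E, x ∈ E, and let h, ĥ ∈ ℝ with h + ĥ ≠ 0. Fix Runge–Kutta coefficients a_{ij}, b_i (1 ≤ i, j ≤ I) and â_{ij}, b̂_i (1 ≤ i, j ≤ Î). Suppose v = (v_1, …, v_I) satisfies v_i = x + h·Σ_{j=1}^I a_{ij}·g(v_j) with output y := x + h·Σ_{j=1}^I b_j·g(v_j), and w = (w_1, …, w_Î) satisfies w_i = y + ĥ·Σ_{j=1}^{Î} â_{ij}·g(w_j) with output z := y + ĥ·Σ_{j=1}^{Î} b̂_j·g(w_j). Define combined coefficients on the index set {1,…,I} ⊔ {1,…,Î} by: A_{(i)(j)} = a_{ij}·h/(h+ĥ) and A_{(i)(ĵ)} = 0 for i, j among the first I indices and ĵ among the last Î; A_{(î)(j)} = b_j·h/(h+ĥ) and A_{(î)(ĵ)} = â_{îĵ}·ĥ/(h+ĥ) for î, ĵ among the last Î indices; and weights B_{(j)} = b_j·h/(h+ĥ), B_{(ĵ)} = b̂_ĵ·ĥ/(h+ĥ). Then the concatenated stage tuple V (equal to v on the first I indices and w on the last Î indices) satisfies V_i = x + (h+ĥ)·Σ_j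 A_{ij}·g(V_j) for every index i, and z = x + (h+ĥ)·Σ_j B_j·g(V_j). -/
/-- Combined Runge–Kutta stage coefficients for the composition of a step of size `h`
(with coefficients `a`, `b`) followed by a step of size `hhat` (with coefficients
`ahat`), viewed as a single method with step `h + hhat`. -/
noncomputable def combA {I Ihat : ℕ} (a : Fin I → Fin I → ℝ) (b : Fin I → ℝ)
    (ahat : Fin Ihat → Fin Ihat → ℝ) (h hhat : ℝ) :
    (Fin I ⊕ Fin Ihat) → (Fin I ⊕ Fin Ihat) → ℝ
  | Sum.inl i, Sum.inl j => a i j * h / (h + hhat)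
  | Sum.inl _, Sum.inr _ => 0
  | Sum.inr _, Sum.inl j => b j * h / (h + hhat)
  | Sum.inr i, Sum.inr j => ahat i j * hhat / (h + hhat)

/-- Combined Runge–Kutta weights for the composition. -/
noncomputable def combB {I Ihat : ℕ} (b : Fin I → ℝ) (bhat : Fin Ihat → ℝ) (h hhat : ℝ) :
    (Fin I ⊕ Fin Ihat) → ℝ
  | Sum.inl j => b j * h / (h + hhat)
  | Sum.inr j => bhat j * hhat / (h + hhat)

theorem stmt13 {E : Type*} [AddCommGroup E] [Module ℝ E]
    {I Ihat : ℕ} (g : E → E) (x : E) (h hhat : ℝ) (hsum : h + hhat ≠ 0)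
    (a : Fin I → Fin I → ℝ) (b : Fin I → ℝ)
    (ahat : Fin Ihat → Fin Ihat → ℝ) (bhat : Fin Ihat → ℝ)
    (v : Fin I → E) (w : Fin Ihat → E) (y z : E)
    (hv : ∀ i, v i = x + h • ∑ j : Fin I, a i j • g (v j))
    (hy : y = x + h • ∑ j : Fin I, b j • g (v j))
    (hw : ∀ i, w i = y + hhat • ∑ j : Fin Ihat, ahat i j • g (w j))
    (hz : z = y + hhat • ∑ j : Fin Ihat, bhat j • g (w j)) :
    (∀ i : Fin I ⊕ Fin Ihat,
        Sum.elim v w i = x + (h + hhat) •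
          ∑ j : Fin I ⊕ Fin Ihat, combA a b ahat h hhat i j • g (Sum.elim v w j)) ∧
    z = x + (h + hhat) •
          ∑ j : Fin I ⊕ Fin Ihat, combB b bhat h hhat j • g (Sum.elim v w j) := by
  have key : ∀ (n : ℕ) (c : Fin n → ℝ) (k : ℝ) (u : Fin n → E),
      (h + hhat) • ∑ j, (c j * k / (h + hhat)) • u j = k • ∑ j, c j • u j := by
    intro n c k u
    rw [Finset.smul_sum, Finset.smul_sum]
    refine Finset.sum_congr rfl fun j _ => ?_
    rw [smul_smul, smul_smul]
    congr 1
    field_simp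
  refine ⟨?_, ?_⟩
  · rintro (i | i)
    · simp only [Fintype.sum_sum_type, combA, Sum.elim_inl, Sum.elim_inr, zero_smul,
        Finset.sum_const_zero, add_zero, key]
      exact hv i
    · simp only [Fintype.sum_sum_type, combA, Sum.elim_inl, Sum.elim_inr, smul_add, key]
      rw [← add_assoc, ← hy]
      exact hw i
  · simp only [Fintype.sum_sum_type, combB, Sum.elim_inl, Sum.elim_inr, smul_add, key]
    rw [← add_assoc, ← hy]
    exact hz
end

section
/- Let E = ℝ^D, let g : E → E be smooth (of class C^∞), and let x ∈ E. Define the explicit midpoint step Φ_h(x) := x + h·g(x + (h/2)·g(x)). Then, as h → 0, Φ_h(x) = x + h·g(x) + (h²/2)·g′(x)g(x) + (h³/8)·g″(x)(g(x), g(x)) + (h⁴/48)·g‴(x)(g(x), g(x), g(x)) + o(h⁴). -/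
open Filter Topology Asymptotics

theorem iteratedDeriv_line {D : ℕ} (g : (Fin D → ℝ) → (Fin D → ℝ))
    (hg : ContDiff ℝ (⊤ : ℕ∞) g) (x v : Fin D → ℝ) (n : ℕ) :
    iteratedDeriv n (fun t : ℝ => g (x + t • v)) =
      fun t : ℝ => iteratedFDeriv ℝ n g (x + t • v) (fun _ => v) := by
  induction n with
  | zero => ext t; simp
  | succ n ih =>
    rw [iteratedDeriv_succ, ih]
    funext t
    apply ContDiffAt.deriv_fderiv_add_smul
    exact (hg.of_le (by exact_mod_cast le_top)).contDiffAt

theorem stmt15 {D : ℕ} (g : (Fin D → ℝ) → (Fin D → ℝ)) (hg : ContDiff ℝ (⊤ : ℕ∞) g)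
    (x : Fin D → ℝ) :
    (fun h : ℝ => (x + h • g (x + (h / 2) • g x))
      - (x + h • g x + (h ^ 2 / 2) • fderiv ℝ g x (g x)
          + (h ^ 3 / 8) • iteratedFDeriv ℝ 2 g x ![g x, g x]
          + (h ^ 4 / 48) • iteratedFDeriv ℝ 3 g x ![g x, g x, g x]))
      =o[𝓝 0] fun h : ℝ => h ^ 4 := by
  have e2 : (![g x, g x] : Fin 2 → (Fin D → ℝ)) = fun _ => g x := by
    funext i; fin_cases i <;> rfl
  have e3 : (![g x, g x, g x] : Fin 3 → (Fin D → ℝ)) = fun _ => g x := by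
    funext i; fin_cases i <;> rfl
  rw [e3, e2]
  have hφ : ContDiff ℝ (3 : ℕ) (fun t : ℝ => g (x + t • g x)) := by
    have : ContDiff ℝ (3 : ℕ) g := contDiff_infty.1 hg 3
    exact this.comp (by fun_prop)
  have hT := taylor_isLittleO_univ (x₀ := 0) hφ
  have hlim : Tendsto (fun h : ℝ => h / 2) (𝓝 0) (𝓝 0) := by
    have : Continuous (fun h : ℝ => h / 2) := by fun_prop
    simpa using this.tendsto 0
  have h1 := hT.comp_tendsto hlim
  have h2 : (fun h : ℝ => ((h / 2) - 0) ^ 3) =O[𝓝 0] fun h : ℝ => h ^ 3 := by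
    have : (fun h : ℝ => ((h / 2) - 0) ^ 3) = fun h : ℝ => (1 / 8 : ℝ) * h ^ 3 := by
      funext h; ring
    rw [this]
    exact (isBigO_refl _ _).const_mul_left _
  have h3 := (isBigO_refl (fun h : ℝ => h) (𝓝 0)).smul_isLittleO (h1.trans_isBigO h2)
  refine (h3.congr' (Eventually.of_forall fun h => ?_) (Eventually.of_forall fun h => ?_))
  · simp only [Function.comp, taylor_within_apply, iteratedDerivWithin_univ, iteratedDeriv_line g hg,
      Finset.sum_range_succ, Finset.sum_range_zero, Nat.factorial]
    simp only [zero_smul, add_zero, iteratedFDeriv_zero_apply, iteratedFDeriv_one_apply]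
    push_cast
    module
  · simp only [smul_eq_mul]; ring
end

section
/- Let E = ℝ^D, let f : E → E be smooth (of class C^∞), let x ∈ E, and let y : ℝ → E satisfy y(0) = x and y′(t) = f(y(t)) for all t. Define f₂ : E → E by f₂(z) := (1/24)·f″(z)(f(z), f(z)) + (1/6)·f′(z)f′(z)f(z), and for h ∈ ℝ define the perturbed field g_h : E → E by g_h(z) := f(z) + h²·f₂(z). Then the explicit midpoint step applied to g_h matches the exact flow of f to fourth order: (x + h·g_h(x + (h/2)·g_h(x))) − y(h) = O(h⁴) as h → 0. -/
open Filter Topology Asymptotics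

theorem aux_int {E : Type*} [NormedAddCommGroup E] [NormedSpace ℝ E] (φ φ' : ℝ → E) (n : ℕ)
    (h0 : φ 0 = 0) (hd : ∀ t, HasDerivAt φ (φ' t) t)
    (hO : φ' =O[𝓝 0] fun h : ℝ => h ^ n) : φ =O[𝓝 0] fun h : ℝ => h ^ (n + 1) := by
  obtain ⟨C, hC⟩ := hO.bound
  obtain ⟨ε, hε, hb⟩ := Metric.eventually_nhds_iff_ball.1 hC
  refine IsBigO.of_bound C ?_
  filter_upwards [Metric.ball_mem_nhds (0 : ℝ) hε] with h hh
  have hh' : |h| < ε := by simpa using hh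
  have key := (convex_closedBall (0 : ℝ) |h|).norm_image_sub_le_of_norm_hasDerivWithin_le
    (f := φ) (f' := φ') (C := C * |h| ^ n) (x := 0) (y := h)
    (fun t _ => (hd t).hasDerivWithinAt) (fun t ht => by
      have ht' : |t| ≤ |h| := by simpa using ht
      have h1 := hb t (by simpa using lt_of_le_of_lt ht' hh')
      have hC0 : ‖φ' t‖ ≤ |C| * |t| ^ n ∧ ‖φ' t‖ ≤ C * |t| ^ n := by
        rw [norm_pow, Real.norm_eq_abs] at h1
        exact ⟨h1.trans (by gcongr; exact le_abs_self C), h1⟩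
      rcases le_or_gt 0 C with hc | hc
      · exact hC0.2.trans (by gcongr)
      · have h2 := hb h (by simpa using hh')
        rw [norm_pow, Real.norm_eq_abs] at h2
        have h3 : |h| ^ n = 0 := by
          have : 0 ≤ C * |h| ^ n := (norm_nonneg _).trans h2
          have h4 : 0 ≤ |h| ^ n := by positivity
          nlinarith
        have h4 : |t| ^ n = 0 := le_antisymm (h3 ▸ (by gcongr)) (by positivity)
        rw [h3, ← h4]; exact hC0.2)
    (by simp) (by simp)
  rw [h0] at key
  simp only [sub_zero] at key
  rw [norm_pow, Real.norm_eq_abs, pow_succ, ← mul_assoc]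
  simpa using key

theorem aux_sub {E : Type*} [NormedAddCommGroup E] [NormedSpace ℝ E] (φ : ℝ → E)
    (hd : DifferentiableAt ℝ φ 0) : (fun h => φ h - φ 0) =O[𝓝 0] fun h : ℝ => h ^ 1 := by
  simpa using hd.isBigO_sub

theorem aux_comp {E : Type*} [NormedAddCommGroup E] [NormedSpace ℝ E] (f : E → E)
    (hf : ContDiff ℝ (⊤ : ℕ∞) f) (c v a : ℝ → E) (hc : ∀ t, HasDerivAt c (v t) t)
    (hv : ∀ t, HasDerivAt v (a t) t) (ha : DifferentiableAt ℝ a 0) :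
    (fun h : ℝ => f (c h) - (f (c 0) + h • fderiv ℝ f (c 0) (v 0) + (h ^ 2 / 2) •
      (fderiv ℝ (fderiv ℝ f) (c 0) (v 0) (v 0) + fderiv ℝ f (c 0) (a 0))))
      =O[𝓝 0] fun h : ℝ => h ^ 3 := by
  have hf1 : ContDiff ℝ (⊤ : ℕ∞) (fderiv ℝ f) := hf.fderiv_right (by simp)
  have hf2 : ContDiff ℝ (⊤ : ℕ∞) (fderiv ℝ (fderiv ℝ f)) := hf1.fderiv_right (by simp)
  have d0 : ∀ z, HasFDerivAt f (fderiv ℝ f z) z := fun z =>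
    (hf.differentiable (by simp) z).hasFDerivAt
  have d1 : ∀ z, HasFDerivAt (fderiv ℝ f) (fderiv ℝ (fderiv ℝ f) z) z := fun z =>
    (hf1.differentiable (by simp) z).hasFDerivAt
  have e1 : ∀ t, HasDerivAt (fun t => f (c t)) (fderiv ℝ f (c t) (v t)) t := fun t =>
    (d0 (c t)).comp_hasDerivAt t (hc t)
  have e2 : ∀ t, HasDerivAt (fun t => fderiv ℝ f (c t) (v t))
      (fderiv ℝ (fderiv ℝ f) (c t) (v t) (v t) + fderiv ℝ f (c t) (a t)) t := fun t =>
    ((d1 (c t)).comp_hasDerivAt t (hc t)).clm_apply (hv t)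
  set A := fderiv ℝ (fderiv ℝ f) (c 0) (v 0) (v 0) + fderiv ℝ f (c 0) (a 0) with hA
  refine aux_int _ (fun h => fderiv ℝ f (c h) (v h) - (fderiv ℝ f (c 0) (v 0) + h • A)) 2
    (by simp) (fun t => ?_) (aux_int _ (fun h => (fderiv ℝ (fderiv ℝ f) (c h) (v h) (v h)
      + fderiv ℝ f (c h) (a h)) - A) 1 (by simp) (fun t => ?_) ?_)
  · refine (e1 t).sub ?_
    have h1 := ((hasDerivAt_id t).smul_const (fderiv ℝ f (c 0) (v 0))).const_add (f (c 0))
    have h2 := (((hasDerivAt_id t).pow 2).div_const 2).smul_const A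
    refine (h1.add h2).congr_deriv ?_
    simp only [id, Nat.cast_ofNat, Nat.reduceSub]
    module
  · refine (e2 t).sub ?_
    simpa using ((hasDerivAt_id t).smul_const A).const_add (fderiv ℝ f (c 0) (v 0))
  · refine aux_sub (fun h => fderiv ℝ (fderiv ℝ f) (c h) (v h) (v h) + fderiv ℝ f (c h) (a h)) ?_
    have hc' := (hc 0).differentiableAt
    have hv' := (hv 0).differentiableAt
    have g1 : DifferentiableAt ℝ (fun h => fderiv ℝ f (c h)) 0 :=
      (hf1.differentiable (by simp) (c 0)).comp 0 hc'
    have g2 : DifferentiableAt ℝ (fun h => fderiv ℝ (fderiv ℝ f) (c h)) 0 :=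
      (hf2.differentiable (by simp) (c 0)).comp 0 hc'
    exact ((g2.clm_apply hv').clm_apply hv').add (g1.clm_apply ha)

theorem stmt16 {D : ℕ} (f : (Fin D → ℝ) → (Fin D → ℝ)) (hf : ContDiff ℝ (⊤ : ℕ∞) f)
    (x : Fin D → ℝ) (y : ℝ → Fin D → ℝ) (hy0 : y 0 = x)
    (hy : ∀ t : ℝ, HasDerivAt y (f (y t)) t)
    (f₂ : (Fin D → ℝ) → (Fin D → ℝ))
    (hf₂ : ∀ z, f₂ z = (1 / 24 : ℝ) • iteratedFDeriv ℝ 2 f z ![f z, f z]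
        + (1 / 6 : ℝ) • fderiv ℝ f z (fderiv ℝ f z (f z)))
    (g : ℝ → (Fin D → ℝ) → (Fin D → ℝ))
    (hg : ∀ (h : ℝ) (z : Fin D → ℝ), g h z = f z + h ^ 2 • f₂ z) :
    (fun h : ℝ => (x + h • g h (x + (h / 2) • g h x)) - y h) =O[𝓝 0] fun h : ℝ => h ^ 4 := by
  have hf1 : ContDiff ℝ (⊤ : ℕ∞) (fderiv ℝ f) := hf.fderiv_right (by simp)
  have hf2 : ContDiff ℝ (⊤ : ℕ∞) (fderiv ℝ (fderiv ℝ f)) := hf1.fderiv_right (by simp)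
  have hf₂' : ∀ z, f₂ z = (1 / 24 : ℝ) • fderiv ℝ (fderiv ℝ f) z (f z) (f z)
        + (1 / 6 : ℝ) • fderiv ℝ f z (fderiv ℝ f z (f z)) := by
    intro z; rw [hf₂, iteratedFDeriv_two_apply]; simp
  have df : Differentiable ℝ f := hf.differentiable (by simp)
  have df1 : Differentiable ℝ (fderiv ℝ f) := hf1.differentiable (by simp)
  have df2 : Differentiable ℝ (fderiv ℝ (fderiv ℝ f)) := hf2.differentiable (by simp)
  have dF : Differentiable ℝ f₂ := by
    rw [funext hf₂']
    exact (((df2.clm_apply df).clm_apply df).const_smul (_ : ℝ)).add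
      ((df1.clm_apply (df1.clm_apply df)).const_smul (_ : ℝ))
  have dy : Differentiable ℝ y := fun t => (hy t).differentiableAt
  -- expansion of the flow
  have hv : ∀ t, HasDerivAt (fun t => f (y t)) (fderiv ℝ f (y t) (f (y t))) t := fun t =>
    (df (y t)).hasFDerivAt.comp_hasDerivAt t (hy t)
  have Y1 := aux_comp f hf y (fun t => f (y t)) (fun t => fderiv ℝ f (y t) (f (y t))) hy hv
    (((df1.comp dy).clm_apply (df.comp dy)) 0)
  simp only [hy0] at Y1
  set B := fderiv ℝ (fderiv ℝ f) x (f x) (f x) with hB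
  set P := fderiv ℝ f x (f x) with hP
  set Q := fderiv ℝ f x P with hQ
  have Y : (fun h : ℝ => y h - (x + h • f x + (h ^ 2 / 2) • P + (h ^ 3 / 6) • (B + Q)))
      =O[𝓝 0] fun h : ℝ => h ^ 4 := by
    refine aux_int _ _ 3 (by simp [hy0]) (fun t => (hy t).sub ?_) Y1
    have h1 := ((hasDerivAt_id t).smul_const (f x)).const_add x
    have h2 := (((hasDerivAt_id t).pow 2).div_const 2).smul_const P
    have h3 := (((hasDerivAt_id t).pow 3).div_const 6).smul_const (B + Q)
    refine ((h1.add h2).add h3).congr_deriv ?_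
    simp only [id, Nat.cast_ofNat, Nat.reduceSub]
    module
  -- expansion of the method
  have W1 := aux_comp f hf (fun h => x + (h / 2) • f x + (h ^ 3 / 2) • f₂ x)
    (fun h => (1 / 2 : ℝ) • f x + (3 * h ^ 2 / 2) • f₂ x) (fun h => (3 * h) • f₂ x)
    (fun t => by
      have h1 := (((hasDerivAt_id t).div_const 2).smul_const (f x)).const_add x
      have h3 := (((hasDerivAt_id t).pow 3).div_const 2).smul_const (f₂ x)
      refine (h1.add h3).congr_deriv ?_
      simp only [id, Nat.cast_ofNat, Nat.reduceSub]
      module)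
    (fun t => by
      have h3 := ((((hasDerivAt_id t).pow 2).const_mul 3).div_const 2).smul_const (f₂ x)
      refine (h3.const_add ((1 / 2 : ℝ) • f x)).congr_deriv ?_
      simp only [id, Nat.cast_ofNat, Nat.reduceSub]
      module)
    (by fun_prop)
  have W2 := aux_sub (fun h : ℝ => f₂ (x + (h / 2) • f x + (h ^ 3 / 2) • f₂ x)) (by fun_prop)
  have W3 := (isBigO_refl (fun h : ℝ => h ^ 2) (𝓝 0)).smul W2
  simp only [smul_eq_mul, ← pow_add] at W3
  have W := (isBigO_refl (fun h : ℝ => h) (𝓝 0)).smul (W1.add W3)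
  simp only [smul_eq_mul, ← pow_succ'] at W
  refine (W.sub Y).congr_left fun h => ?_
  have hw : x + (h / 2) • g h x = x + (h / 2) • f x + (h ^ 3 / 2) • f₂ x := by
    rw [hg]; module
  rw [hw, hg]
  simp [← hB, ← hP, hf₂' x, ← hQ]
  module
end

section
/- Let h > 0, b ∈ ℝ, and p₀, q₀ ∈ ℝ. Suppose p, q : ℝ → ℝ satisfy p(0) = p₀, q(0) = q₀, p′(t) = 1 for all t, and q′(t) = sin((2π/h)·p(t) + b) for all t. Then p(h) = p₀ + h and q(h) = q₀; in particular, the time-h value (p(h), q(h)) is independent of the parameter b. -/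
theorem stmt18 (h b p₀ q₀ : ℝ) (hh : 0 < h) (p q : ℝ → ℝ)
    (hp0 : p 0 = p₀) (hq0 : q 0 = q₀)
    (hp : ∀ t : ℝ, HasDerivAt p 1 t)
    (hq : ∀ t : ℝ, HasDerivAt q (Real.sin ((2 * Real.pi / h) * p t + b)) t) :
    p h = p₀ + h ∧ q h = q₀ := by
  have key : ∀ f : ℝ → ℝ, (∀ t, HasDerivAt f 0 t) → f h = f 0 := fun f hf =>
    is_const_of_deriv_eq_zero (fun t => (hf t).differentiableAt) (fun t => (hf t).deriv) h 0
  have h1 : p h = p₀ + h := by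
    have := key (fun t => p t - t) (fun t => by
      exact ((hp t).sub (hasDerivAt_id' t)).congr_deriv (sub_self 1))
    simp only [hp0] at this
    linarith
  refine ⟨h1, ?_⟩
  have hc : 2 * Real.pi / h ≠ 0 := by positivity
  have hch : 2 * Real.pi / h * h = 2 * Real.pi := by field_simp
  generalize 2 * Real.pi / h = c at *
  have h2 := key (fun t => q t + Real.cos (c * p t + b) / c) (fun t => by
    have h3 := (hq t).add (((((hp t).const_mul c).add_const b).cos).div_const c)
    refine h3.congr_deriv ?_
    field_simp
    ring)
  simp only [hp0, hq0, h1] at h2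
  have h4 : c * (p₀ + h) + b = (c * p₀ + b) + 2 * Real.pi := by
    rw [← hch]; ring
  rw [h4, Real.cos_add_two_pi] at h2
  linarith
end
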